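/- Let S = ⟨a_1, …, a_k⟩ be a numerical semigroup with minimal generators a_1 < ⋯ < a_k, let A = a_1 + ⋯ + a_k, and fix B' > 0. Then for all sufficiently large x ∈ S, 𝓛_∞(x + A) ∩ [0, (x + A)/A + B'] = 1 + (𝓛_∞(x) ∩ [0, x/A + B']), i.e., the portion of 𝓛_∞(x) within B' of its bottom end shifts by exactly 1 when x is replaced by x + A. -/

import Mathlib

open Finset

/-- `Zfac a x`: the set of factorizations of `x` with respect to the generators `a`. -/
def Zfac {k : ℕ} (a : Fin k → ℕ) (x : ℕ) : Set (Fin k → ℕ) :=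
  {z | ∑ j, z j * a j = x}

/-- The `∞`-length of a factorization: the maximum coordinate. -/
def linf {k : ℕ} (z : Fin k → ℕ) : ℕ :=
  Finset.univ.sup z

/-- The `0`-length of a factorization: the size of its support. -/
def lzero {k : ℕ} (z : Fin k → ℕ) : ℕ :=
  (Finset.univ.filter fun i => z i ≠ 0).card

/-- `𝓛∞(x)`: the set of `∞`-lengths of factorizations of `x`. -/
def LinfSet {k : ℕ} (a : Fin k → ℕ) (x : ℕ) : Set ℕ :=
  linf '' Zfac a x

/-- `𝓛∞(x, i)`: `∞`-lengths of factorizations whose maximum coordinate is attained at `i`. -/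
def LinfSetI {k : ℕ} (a : Fin k → ℕ) (x : ℕ) (i : Fin k) : Set ℕ :=
  linf '' {z | z ∈ Zfac a x ∧ z i = linf z}

/-- `𝓛₀(x)`: the set of `0`-lengths of factorizations of `x`. -/
def LzeroSet {k : ℕ} (a : Fin k → ℕ) (x : ℕ) : Set ℕ :=
  lzero '' Zfac a x

/-- The set of differences between consecutive elements of a set `T ⊆ ℕ`. -/
def deltaSet (T : Set ℕ) : Set ℕ :=
  {d | ∃ u ∈ T, ∃ v ∈ T, u < v ∧ v - u = d ∧ ∀ t ∈ T, ¬(u < t ∧ t < v)}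

/-- `Δ∞(x)`. -/
def DeltaInf {k : ℕ} (a : Fin k → ℕ) (x : ℕ) : Set ℕ := deltaSet (LinfSet a x)

/-- `Δ∞(S) = ⋃ x ∈ S, Δ∞(x)` (for `x ∉ S` the contribution is empty). -/
def DeltaInfS {k : ℕ} (a : Fin k → ℕ) : Set ℕ := ⋃ x : ℕ, DeltaInf a x

/-- `Δ₀(x)`. -/
def DeltaZero {k : ℕ} (a : Fin k → ℕ) (x : ℕ) : Set ℕ := deltaSet (LzeroSet a x)

/-- `Δ₀(S) = ⋃ x ∈ S, Δ₀(x)` (for `x ∉ S` the contribution is empty). -/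
def DeltaZeroS {k : ℕ} (a : Fin k → ℕ) : Set ℕ := ⋃ x : ℕ, DeltaZero a x

/-- `a` is a system of minimal generators: no generator is a `ℕ`-combination of the others. -/
def MinimalGens {k : ℕ} (a : Fin k → ℕ) : Prop :=
  ∀ i : Fin k, ¬ ∃ z : Fin k → ℕ, z i = 0 ∧ ∑ j, z j * a j = a i

/-!
Adding `1` to every coordinate turns a factorization of `x` into one of `x + A` and raises its
`∞`-length by `1`; it reaches exactly the factorizations of `x + A` with full support. If `z` is a
factorization of `y` of `∞`-length `L`, the deficits `L - z i` satisfy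
`∑ (L - z i) * a i = L * A - y`, which is at most `B * A` when `L ≤ y / A + B`. A zero coordinate
would have deficit `L`, so `L ≤ B * A` and `y ≤ L * A ≤ B * A ^ 2`. Hence for `y > B * A ^ 2` every
factorization of such length has full support.
-/

section

variable {k : ℕ} {a z : Fin k → ℕ} {x y : ℕ}

theorem MinimalGens.pos (h : MinimalGens a) (i : Fin k) : 0 < a i :=
  Nat.pos_of_ne_zero fun hi => h i ⟨0, rfl, by simp [hi]⟩

theorem le_linf (z : Fin k → ℕ) (i : Fin k) : z i ≤ linf z :=
  Finset.le_sup (Finset.mem_univ i)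

theorem linf_add_one [NeZero k] (z : Fin k → ℕ) : linf (z + 1) = linf z + 1 :=
  (Finset.sup_add Finset.univ_nonempty z 1).symm

theorem add_one_mem_Zfac_iff : z + 1 ∈ Zfac a (x + ∑ i, a i) ↔ z ∈ Zfac a x := by
  simp [Zfac, add_mul, Finset.sum_add_distrib]

theorem sum_linf_sub_mul_add (hz : z ∈ Zfac a y) :
    ∑ i, (linf z - z i) * a i + y = linf z * ∑ i, a i :=
  calc ∑ i, (linf z - z i) * a i + y
      = ∑ i, ((linf z - z i) * a i + z i * a i) := by
        rw [Finset.sum_add_distrib, show ∑ i, z i * a i = y from hz]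
    _ = ∑ i, linf z * a i := by
        simp only [← add_mul, Nat.sub_add_cancel (le_linf z _)]
    _ = linf z * ∑ i, a i := (Finset.mul_sum ..).symm

theorem linf_sub_mul_add_le (hz : z ∈ Zfac a y) (i : Fin k) :
    (linf z - z i) * a i + y ≤ linf z * ∑ j, a j := by
  rw [← sum_linf_sub_mul_add hz]
  gcongr
  exact Finset.single_le_sum_of_canonicallyOrdered (f := fun j => (linf z - z j) * a j)
    (Finset.mem_univ i)

variable {𝕜 : Type*} [Field 𝕜] [LinearOrder 𝕜] [IsStrictOrderedRing 𝕜] {A : ℕ} {B : 𝕜}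

theorem pos_of_linf_le_div_add (ha : ∀ i, 0 < a i) (hA : A = ∑ i, a i) (hy : B * A ^ 2 < y)
    (hz : z ∈ Zfac a y) (hle : (linf z : 𝕜) ≤ y / A + B) (i : Fin k) : 0 < z i := by
  by_contra! hi
  have hApos : (0 : 𝕜) < A := by
    exact_mod_cast hA ▸ (ha i).trans_le
      (Finset.single_le_sum_of_canonicallyOrdered (Finset.mem_univ i))
  have hdeficit : linf z + y ≤ linf z * A :=
    calc linf z + y ≤ linf z * a i + y := by gcongr; exact Nat.le_mul_of_pos_right _ (ha i)
      _ = (linf z - z i) * a i + y := by rw [Nat.le_zero.mp hi, Nat.sub_zero]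
      _ ≤ linf z * A := hA ▸ linf_sub_mul_add_le hz i
  have hdeficit' : (linf z : 𝕜) + y ≤ linf z * A := mod_cast hdeficit
  have hupper : (linf z : 𝕜) * A ≤ y + B * A :=
    calc (linf z : 𝕜) * A ≤ (y / A + B) * A := by gcongr
      _ = y + B * A := by field_simp
  have hlinf : (linf z : 𝕜) ≤ B * A := by linarith
  refine hy.not_ge ?_
  calc (y : 𝕜) ≤ linf z * A := (le_add_of_nonneg_left (Nat.cast_nonneg _)).trans hdeficit'
    _ ≤ B * A * A := by gcongr
    _ = B * A ^ 2 := by ring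

theorem stmt_4_general [NeZero k] (ha : ∀ i, 0 < a i) (hA : A = ∑ i, a i)
    (hx : B * A ^ 2 < (x : 𝕜) + A) :
    {ℓ : ℕ | ℓ ∈ LinfSet a (x + A) ∧ (ℓ : 𝕜) ≤ ((x : 𝕜) + A) / A + B} =
      (fun n => 1 + n) '' {ℓ : ℕ | ℓ ∈ LinfSet a x ∧ (ℓ : 𝕜) ≤ (x : 𝕜) / A + B} := by
  have hA0 : (A : 𝕜) ≠ 0 := by
    exact_mod_cast hA ▸ (Finset.sum_pos (fun i _ => ha i) Finset.univ_nonempty).ne'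
  have hbound (n : ℕ) : ((1 + n : ℕ) : 𝕜) ≤ (x + A) / A + B ↔ (n : 𝕜) ≤ x / A + B := by
    rw [add_div, div_self hA0, Nat.cast_add, Nat.cast_one, add_comm _ (1 : 𝕜), add_assoc,
      add_le_add_iff_left]
  ext ℓ
  constructor
  · rintro ⟨⟨z, hz, rfl⟩, hle⟩
    have hpos : ∀ i, 0 < z i :=
      pos_of_linf_le_div_add ha hA (by exact_mod_cast hx) hz (by exact_mod_cast hle)
    obtain ⟨w, rfl⟩ : ∃ w, z = w + 1 :=
      ⟨z - 1, (tsub_add_cancel_of_le fun i => hpos i).symm⟩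
    rw [linf_add_one, add_comm (linf w)] at hle ⊢
    exact ⟨linf w, ⟨⟨w, add_one_mem_Zfac_iff.mp (hA ▸ hz), rfl⟩, (hbound _).mp hle⟩, rfl⟩
  · rintro ⟨_, ⟨⟨w, hw, rfl⟩, hle⟩, rfl⟩
    exact ⟨⟨w + 1, hA ▸ add_one_mem_Zfac_iff.mpr hw, by rw [linf_add_one, add_comm]⟩,
      (hbound _).mpr hle⟩

end

/-- The portion of `𝓛∞(x)` within `B'` of its bottom end shifts by exactly `1`
when `x` is replaced by `x + A`, for all sufficiently large `x ∈ S`. -/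
theorem stmt_4 (k : ℕ) (a : Fin k → ℕ)
    (hmono : StrictMono a)
    (hgcd : Finset.univ.gcd a = 1)
    (hmin : MinimalGens a)
    (A : ℕ) (hA : A = ∑ i, a i)
    (B' : ℚ) (hB' : 0 < B') :
    ∃ N : ℕ, ∀ x : ℕ, N ≤ x → (Zfac a x).Nonempty →
      {ℓ : ℕ | ℓ ∈ LinfSet a (x + A) ∧
          (ℓ : ℚ) ≤ ((x : ℚ) + (A : ℚ)) / (A : ℚ) + B'} =
        (fun n => 1 + n) '' {ℓ : ℕ | ℓ ∈ LinfSet a x ∧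
          (ℓ : ℚ) ≤ (x : ℚ) / (A : ℚ) + B'} := by
  have : NeZero k := ⟨by rintro rfl; simp at hgcd⟩
  obtain ⟨N, hN⟩ := exists_nat_gt (B' * A ^ 2)
  exact ⟨N, fun x hx _ => stmt_4_general hmin.pos hA <| hN.trans_le <|
    by exact_mod_cast hx.trans (Nat.le_add_right x A)⟩
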